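/- arXiv:2308.14660 — 2 statements merged into one kernel-verified Lean document; each statement's English description precedes it below -/
import Mathlib

section
/- For every g ∈ W^{1,2}((0, α)) (viewed as a function on the boundary arc {ρ = 1, 0 ≤ θ ≤ α} of the circular sector V = {(ρ, θ) : 0 < ρ < 1, 0 < θ < α} with 0 < α < 2π), there exists a harmonic function v ∈ W^{1,2}(V) extending g with ∫_V |∇v|² ≤ (α/π) ∫₀^α |g′(θ)|² dθ. -/
open Real MeasureTheory Set

/-- The open circular sector of radius 1 and opening angle `α` in the plane. -/
def sector (α : ℝ) : Set (EuclideanSpace ℝ (Fin 2)) :=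
  {x | ∃ ρ ∈ Set.Ioo (0:ℝ) 1, ∃ θ ∈ Set.Ioo (0:ℝ) α,
    x = ((WithLp.equiv 2 (Fin 2 → ℝ)).symm ![ρ * Real.cos θ, ρ * Real.sin θ] : EuclideanSpace ℝ (Fin 2))}

/-! Harmonic functions are conformally invariant, and so is the Dirichlet energy. The power
`z ^ (π / α)` maps the sector conformally onto the upper half of the unit disc, the arc going to the
half circle, and there the cosine series `∑ aₖ cos (k π θ / α)` of `g` becomes the boundary value
of the real part of the power series `h w = ∑ aₖ wᵏ`. On each half circle around `0` the
real coefficients make the cross terms of `|h'|²` cosines of integer frequency, whose integrals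
vanish, so that the energy of `h` on the half disc is `(π / 2) ∑ k aₖ²`. Since the numbers `k aₖ`
are, up to a factor, the coefficients of `g'` against the orthogonal system `sin (k π θ / α)`,
Bessel's inequality gives `∑ k² aₖ² ≤ (2 α / π²) ∫ g'²`, and `k ≤ k²` concludes. Bessel's inequality
also makes `∑ |aₖ|` converge, hence the extension is continuous up to the boundary. -/

section CosineSeries

variable {α : ℝ}

lemma integral_cos_int_mul_pi_div (hα : α ≠ 0) {n : ℤ} (hn : n ≠ 0) :
    ∫ t in (0 : ℝ)..α, cos (n * (π / α) * t) = 0 := by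
  have hc : (n : ℝ) * (π / α) ≠ 0 :=
    mul_ne_zero (mod_cast hn) (div_ne_zero pi_ne_zero hα)
  have hcα : (n : ℝ) * (π / α) * α = n * π := by field_simp
  rw [intervalIntegral.integral_comp_mul_left cos hc, integral_cos, hcα]
  simp

lemma integral_sin_mul_sin_pi_div (hα : α ≠ 0) (j : ℕ) {k : ℕ} (hk : k ≠ 0) :
    ∫ t in (0 : ℝ)..α, sin (j * (π / α) * t) * sin (k * (π / α) * t)
      = if j = k then α / 2 else 0 := by
  have product_to_sum (t : ℝ) : sin (j * (π / α) * t) * sin (k * (π / α) * t)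
      = 1 / 2 * (cos (((j - k : ℤ) : ℝ) * (π / α) * t)
        - cos (((j + k : ℤ) : ℝ) * (π / α) * t)) := by
    push_cast
    simp only [add_mul, sub_mul, cos_add, cos_sub]
    ring
  simp only [product_to_sum]
  rw [intervalIntegral.integral_const_mul, intervalIntegral.integral_sub
    (Continuous.intervalIntegrable (by fun_prop) _ _)
    (Continuous.intervalIntegrable (by fun_prop) _ _),
    integral_cos_int_mul_pi_div hα (by omega : (j + k : ℤ) ≠ 0)]
  split_ifs with hjk
  · subst hjk
    simp only [sub_self, Int.cast_zero, zero_mul, cos_zero, intervalIntegral.integral_const,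
      smul_eq_mul]
    ring
  · rw [integral_cos_int_mul_pi_div hα (by omega : (j - k : ℤ) ≠ 0)]
    simp

lemma inner_toLp_toLp {X : Type*} [MeasurableSpace X] {μ : Measure X} {f g : X → ℝ}
    (hf : MemLp f 2 μ) (hg : MemLp g 2 μ) :
    inner ℝ (hf.toLp f) (hg.toLp g) = ∫ x, f x * g x ∂μ := by
  rw [L2.inner_def]
  refine integral_congr_ae ?_
  filter_upwards [hf.coeFn_toLp, hg.coeFn_toLp] with x hfx hgx
  simp [hfx, hgx, mul_comm]

lemma sum_sq_integral_mul_le {X ι : Type*} [MeasurableSpace X] [DecidableEq ι] {μ : Measure X}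
    {f : X → ℝ} {e : ι → X → ℝ} {c : ℝ} (hc : 0 < c) (hf : MemLp f 2 μ)
    (he : ∀ i, MemLp (e i) 2 μ)
    (horth : ∀ i j, ∫ x, e i x * e j x ∂μ = if i = j then c else 0) (s : Finset ι) :
    ∑ i ∈ s, (∫ x, e i x * f x ∂μ) ^ 2 ≤ c * ∫ x, f x ^ 2 ∂μ := by
  have horthonormal : Orthonormal ℝ fun i => (√c)⁻¹ • (he i).toLp (e i) := by
    rw [orthonormal_iff_ite]
    intro i j
    rw [real_inner_smul_left, real_inner_smul_right, inner_toLp_toLp, horth, ← mul_assoc,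
      ← mul_inv, mul_self_sqrt hc.le, mul_ite, inv_mul_cancel₀ hc.ne', mul_zero]
  have bessel := horthonormal.sum_inner_products_le (hf.toLp f) (s := s)
  simp only [real_inner_smul_left, inner_toLp_toLp, ← real_inner_self_eq_norm_sq, norm_eq_abs,
    sq_abs, mul_pow, inv_pow, sq_sqrt hc.le, ← Finset.mul_sum, ← pow_two] at bessel
  rwa [inv_mul_le_iff₀ hc] at bessel

lemma continuousOn_of_primitive {a b : ℝ} {f f' : ℝ → ℝ}
    (hf : ∀ x ∈ uIcc a b, f x = f a + ∫ t in a..x, f' t)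
    (hf' : IntervalIntegrable f' volume a b) : ContinuousOn f (uIcc a b) :=
  (continuousOn_const.add (hf'.absolutelyContinuousOnInterval_intervalIntegral
    left_mem_uIcc).continuousOn).congr hf

lemma integral_mul_deriv_eq_of_primitive {a b : ℝ} {f f' u : ℝ → ℝ}
    (hf : ∀ x ∈ uIcc a b, f x = f a + ∫ t in a..x, f' t) (hf' : IntervalIntegrable f' volume a b)
    (hu : AbsolutelyContinuousOnInterval u a b) :
    ∫ t in a..b, f t * deriv u t = f b * u b - f a * u a - ∫ t in a..b, f' t * u t := by
  let F : ℝ → ℝ := fun x => f a + ∫ t in a..x, f' t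
  have hF : AbsolutelyContinuousOnInterval F a b :=
    (ContDiffOn.absolutelyContinuousOnInterval contDiffOn_const).fun_add
      (hf'.absolutelyContinuousOnInterval_intervalIntegral left_mem_uIcc)
  have hderiv : ∫ t in a..b, deriv F t * u t = ∫ t in a..b, f' t * u t := by
    refine intervalIntegral.integral_congr_ae ?_
    filter_upwards [hf'.ae_hasDerivAt_integral] with t ht htab
    rw [((ht (uIoc_subset_uIcc htab) a left_mem_uIcc).const_add (f a)).deriv]
  calc ∫ t in a..b, f t * deriv u t
      = ∫ t in a..b, F t * deriv u t :=
        intervalIntegral.integral_congr fun t ht => congrArg (· * deriv u t) (hf t ht)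
    _ = f b * u b - f a * u a - ∫ t in a..b, f' t * u t := by
        have hFa : F a = f a := (hf a left_mem_uIcc).symm
        have hFb : F b = f b := (hf b right_mem_uIcc).symm
        rw [hF.integral_mul_deriv_eq_deriv_mul hu, hderiv, hFa, hFb]

/-- The coefficients of the cosine series `∑ aₖ cos (k π θ / α)` of a function on `[0, α]`, that is,
of the Fourier series of its even `2 α`-periodic extension; the constant coefficient `a₀` is the
mean value. -/
noncomputable def cosCoeff (α : ℝ) (g : ℝ → ℝ) (k : ℕ) : ℝ :=
  (if k = 0 then 1 else 2) / α * ∫ t in (0 : ℝ)..α, g t * cos (k * (π / α) * t)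

lemma nat_mul_cosCoeff {g g' : ℝ → ℝ} (hα : 0 < α)
    (hg : ∀ x ∈ Icc 0 α, g x = g 0 + ∫ t in (0 : ℝ)..x, g' t)
    (hg' : IntervalIntegrable g' volume 0 α) (k : ℕ) :
    k * cosCoeff α g k = -(2 / π) * ∫ t in (0 : ℝ)..α, sin (k * (π / α) * t) * g' t := by
  rcases eq_or_ne k 0 with rfl | hk
  · simp
  let u : ℝ → ℝ := fun t => sin (k * (π / α) * t)
  have hu : ContDiff ℝ 1 u := by fun_prop
  have hu0 : u 0 = 0 := by simp [u]
  have huα : u α = 0 := by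
    rw [← sin_nat_mul_pi k]
    simp only [u]
    field_simp
  have hderiv : deriv u = fun t => k * (π / α) * cos (k * (π / α) * t) := by
    ext t
    simp [u, mul_comm]
  have hparts := integral_mul_deriv_eq_of_primitive (uIcc_of_le hα.le ▸ hg) hg'
    (ContDiffOn.absolutelyContinuousOnInterval hu.contDiffOn)
  simp only [hderiv, huα, hu0, mul_zero, sub_zero, zero_sub, mul_left_comm (g _),
    intervalIntegral.integral_const_mul, u, mul_comm (g' _)] at hparts
  rw [← neg_eq_iff_eq_neg] at hparts
  rw [cosCoeff, if_neg hk, ← hparts]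
  field_simp

lemma sum_sq_succ_mul_cosCoeff_le {g g' : ℝ → ℝ} (hα : 0 < α)
    (hg : ∀ x ∈ Icc 0 α, g x = g 0 + ∫ t in (0 : ℝ)..x, g' t)
    (hg' : IntervalIntegrable g' volume 0 α)
    (hg'2 : IntervalIntegrable (fun t => g' t ^ 2) volume 0 α) (s : Finset ℕ) :
    ∑ k ∈ s, ((k + 1) * cosCoeff α g (k + 1)) ^ 2
      ≤ 2 * α / π ^ 2 * ∫ t in (0 : ℝ)..α, g' t ^ 2 := by
  let e : ℕ → ℝ → ℝ := fun k t => sin ((k + 1 : ℕ) * (π / α) * t)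
  have he (k : ℕ) : MemLp (e k) 2 (volume.restrict (Ioc 0 α)) :=
    (memLp_two_iff_integrable_sq (Continuous.aestronglyMeasurable (by fun_prop))).2
      (Continuous.integrableOn_Ioc (by fun_prop))
  have hg'L2 : MemLp g' 2 (volume.restrict (Ioc 0 α)) :=
    (memLp_two_iff_integrable_sq hg'.1.aestronglyMeasurable).2 hg'2.1
  have horth (j k : ℕ) : ∫ t in Ioc 0 α, e j t * e k t = if j = k then α / 2 else 0 := by
    rw [← intervalIntegral.integral_of_le hα.le,
      integral_sin_mul_sin_pi_div hα.ne' _ k.succ_ne_zero]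
    simp only [Nat.succ_eq_add_one, add_left_inj]
  have bessel := sum_sq_integral_mul_le (half_pos hα) hg'L2 he horth s
  simp only [← intervalIntegral.integral_of_le hα.le] at bessel
  calc ∑ k ∈ s, ((k + 1) * cosCoeff α g (k + 1)) ^ 2
      = (2 / π) ^ 2 * ∑ k ∈ s, (∫ t in (0 : ℝ)..α, e k t * g' t) ^ 2 := by
        rw [Finset.mul_sum]
        refine Finset.sum_congr rfl fun k _ => ?_
        have hk := nat_mul_cosCoeff hα hg hg' (k + 1)
        push_cast at hk
        rw [hk, mul_pow, neg_sq]
        simp only [e]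
        push_cast
        rfl
    _ ≤ (2 / π) ^ 2 * (α / 2 * ∫ t in (0 : ℝ)..α, g' t ^ 2) := by gcongr
    _ = 2 * α / π ^ 2 * ∫ t in (0 : ℝ)..α, g' t ^ 2 := by ring

lemma sum_succ_mul_cosCoeff_sq_le {g g' : ℝ → ℝ} (hα : 0 < α)
    (hg : ∀ x ∈ Icc 0 α, g x = g 0 + ∫ t in (0 : ℝ)..x, g' t)
    (hg' : IntervalIntegrable g' volume 0 α)
    (hg'2 : IntervalIntegrable (fun t => g' t ^ 2) volume 0 α) (s : Finset ℕ) :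
    ∑ k ∈ s, (k + 1) * cosCoeff α g (k + 1) ^ 2
      ≤ 2 * α / π ^ 2 * ∫ t in (0 : ℝ)..α, g' t ^ 2 := by
  refine (Finset.sum_le_sum fun k _ => ?_).trans (sum_sq_succ_mul_cosCoeff_le hα hg hg' hg'2 s)
  rw [mul_pow]
  exact mul_le_mul_of_nonneg_right (le_self_pow₀ (by linarith [k.cast_nonneg (α := ℝ)]) two_ne_zero)
    (sq_nonneg _)

lemma summable_of_summable_sq_succ_mul {a : ℕ → ℝ}
    (ha : Summable fun k : ℕ => ((k + 1) * a (k + 1)) ^ 2) : Summable a := by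
  have hinv : Summable fun k : ℕ => 1 / ((k : ℝ) + 1) ^ 2 :=
    mod_cast (summable_nat_add_iff 1).2 (Real.summable_one_div_nat_pow.2 one_lt_two)
  rw [← summable_nat_add_iff 1]
  refine Summable.of_norm_bounded (ha.add hinv) fun k => ?_
  have hk : (0 : ℝ) < k + 1 := by positivity
  calc ‖a (k + 1)‖
      = |(k + 1) * a (k + 1)| * (1 / ((k : ℝ) + 1)) := by
        rw [abs_mul, abs_of_pos hk, norm_eq_abs]
        field_simp
    _ ≤ |(k + 1) * a (k + 1)| ^ 2 + (1 / ((k : ℝ) + 1)) ^ 2 := by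
        nlinarith [sq_nonneg (|(k + 1) * a (k + 1)| - 1 / ((k : ℝ) + 1)),
          sq_nonneg |(k + 1) * a (k + 1)|, sq_nonneg (1 / ((k : ℝ) + 1))]
    _ = ((k + 1) * a (k + 1)) ^ 2 + 1 / ((k : ℝ) + 1) ^ 2 := by rw [sq_abs, one_div_pow]

/-- The even `2 α`-periodic extension of a function on `[0, α]`. On the circle `ℝ / 2 α ℤ` the norm
of the class of `x ∈ [-α, α]` is `|x|`. -/
noncomputable def evenExtension (α : ℝ) (g : ℝ → ℝ) (x : AddCircle (2 * α)) : ℂ := g ‖x‖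

lemma evenExtension_coe {g : ℝ → ℝ} {x : ℝ} (hα : 0 < α) (hx : |x| ≤ α) :
    evenExtension α g x = g |x| := by
  have hnorm : ‖(x : AddCircle (2 * α))‖ = |x| := by
    rw [AddCircle.norm_coe_eq_abs_iff _ (by positivity), abs_of_pos (mul_pos two_pos hα)]
    linarith
  rw [evenExtension, hnorm]

lemma continuous_evenExtension {g : ℝ → ℝ} (hα : 0 < α) (hg : ContinuousOn g (Icc 0 α)) :
    Continuous (evenExtension α g) := by
  refine Complex.continuous_ofReal.comp (hg.comp_continuous continuous_norm fun x => ?_)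
  have hx := AddCircle.norm_le_half_period (2 * α) (by positivity) (x := x)
  rw [abs_of_pos (by positivity), mul_div_cancel_left₀ _ two_ne_zero] at hx
  exact ⟨norm_nonneg x, hx⟩

lemma integral_neg_self_eq_integral_add_comp_neg {E : Type*} [NormedAddCommGroup E]
    [NormedSpace ℝ E] {f : ℝ → E} {a : ℝ} (hf : IntervalIntegrable f volume (-a) a) :
    ∫ x in -a..a, f x = ∫ x in (0 : ℝ)..a, (f x + f (-x)) := by
  have h0 : (0 : ℝ) ∈ uIcc (-a) a := by
    rcases le_total 0 a with ha | ha
    · exact Icc_subset_uIcc ⟨by linarith, ha⟩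
    · exact Icc_subset_uIcc' ⟨ha, by linarith⟩
  have hneg := hf.mono_set (uIcc_subset_uIcc left_mem_uIcc h0)
  have hpos := hf.mono_set (uIcc_subset_uIcc h0 right_mem_uIcc)
  have hreflect : IntervalIntegrable (fun x => f (-x)) volume 0 a := by
    simpa using ((IntervalIntegrable.iff_comp_neg (by finiteness)).1 hneg).symm
  rw [intervalIntegral.integral_add hpos hreflect, intervalIntegral.integral_comp_neg, neg_zero,
    add_comm, intervalIntegral.integral_add_adjacent_intervals hneg hpos]

lemma fourier_two_mul_coe (hα : α ≠ 0) (n : ℤ) (x : ℝ) :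
    fourier n (x : AddCircle (2 * α)) = Complex.exp ((n * (π / α) * x : ℝ) * Complex.I) := by
  have hα' : (α : ℂ) ≠ 0 := mod_cast hα
  rw [fourier_coe_apply]
  congr 1
  push_cast
  field_simp

lemma fourierCoeff_evenExtension [Fact (0 < 2 * α)] {g : ℝ → ℝ} (hα : 0 < α)
    (hg : ContinuousOn g (Icc 0 α)) (n : ℤ) :
    fourierCoeff (evenExtension α g) n
      = ((1 / α * ∫ t in (0 : ℝ)..α, g t * cos (n * (π / α) * t) : ℝ) : ℂ) := by
  have hint : IntervalIntegrable
      (fun x : ℝ => fourier (-n) (x : AddCircle (2 * α)) • evenExtension α g x) volume (-α) α :=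
    Continuous.intervalIntegrable (by
      have := continuous_evenExtension hα hg
      fun_prop) _ _
  have hfold (t : ℝ) (ht : t ∈ uIcc 0 α) :
      fourier (-n) (t : AddCircle (2 * α)) • evenExtension α g t
        + fourier (-n) ((-t : ℝ) : AddCircle (2 * α)) • evenExtension α g ((-t : ℝ))
      = ((2 * (g t * cos (n * (π / α) * t)) : ℝ) : ℂ) := by
    rw [uIcc_of_le hα.le] at ht
    have habs : |t| = t := abs_of_nonneg ht.1
    rw [evenExtension_coe hα (habs.trans_le ht.2),
      evenExtension_coe hα ((abs_neg t).trans_le (habs.trans_le ht.2)),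
      fourier_two_mul_coe hα.ne', fourier_two_mul_coe hα.ne', abs_neg, habs]
    push_cast
    rw [Complex.cos]
    ring_nf
  rw [fourierCoeff_eq_intervalIntegral _ n (-α), show -α + 2 * α = α by ring,
    integral_neg_self_eq_integral_add_comp_neg hint, intervalIntegral.integral_congr hfold,
    intervalIntegral.integral_ofReal, intervalIntegral.integral_const_mul, Complex.real_smul,
    ← Complex.ofReal_mul]
  congr 1
  ring

lemma hasSum_cosCoeff {g : ℝ → ℝ} (hα : 0 < α) (hg : ContinuousOn g (Icc 0 α))
    (hsum : Summable (cosCoeff α g)) {θ : ℝ} (hθ : θ ∈ Icc 0 α) :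
    HasSum (fun k => cosCoeff α g k * cos (k * (π / α) * θ)) (g θ) := by
  have : Fact (0 < 2 * α) := ⟨by positivity⟩
  let c : ℤ → ℝ := fun n => 1 / α * ∫ t in (0 : ℝ)..α, g t * cos (n * (π / α) * t)
  let G : C(AddCircle (2 * α), ℂ) := ⟨evenExtension α g, continuous_evenExtension hα hg⟩
  have hcoeff (n : ℤ) : fourierCoeff G n = c n := fourierCoeff_evenExtension hα hg n
  have hc_neg (n : ℤ) : c (-n) = c n := by simp [c]
  have hc (k : ℕ) : cosCoeff α g k = if k = 0 then c k else 2 * c k := by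
    simp only [cosCoeff, c, Int.cast_natCast]
    split_ifs <;> ring
  have hc_summable : Summable c := by
    have hnat : Summable fun k : ℕ => c k := by
      refine Summable.of_norm_bounded hsum.abs fun k => ?_
      rw [hc]
      split_ifs
      · rfl
      · rw [abs_mul, abs_two, norm_eq_abs]
        linarith [abs_nonneg (c k)]
    exact hnat.of_nat_of_neg (by simpa only [hc_neg] using hnat)
  have hG : HasSum (fun n : ℤ => c n * cos (n * (π / α) * θ)) (g θ) := by
    have hfourier := has_pointwise_sum_fourier_series_of_summable
      ((Complex.ofRealCLM.summable hc_summable).congr fun n => (hcoeff n).symm)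
      (θ : AddCircle (2 * α))
    have hGθ : G θ = g θ := by
      rw [ContinuousMap.coe_mk, evenExtension_coe hα ((abs_of_nonneg hθ.1).trans_le hθ.2),
        abs_of_nonneg hθ.1]
    simpa only [hcoeff, hGθ, fourier_two_mul_coe hα.ne', smul_eq_mul, Complex.re_ofReal_mul,
      Complex.exp_ofReal_mul_I_re, Complex.ofReal_re] using Complex.hasSum_re hfourier
  have hfold := hG.nat_add_neg.sub (hasSum_ite_eq (0 : ℕ) (c 0))
  simp only [Int.cast_zero, zero_mul, cos_zero, mul_one, add_sub_cancel_right] at hfold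
  refine hfold.congr_fun fun k => ?_
  rcases eq_or_ne k 0 with rfl | hk
  · simp [hc]
  · rw [hc, if_neg hk, if_neg hk, hc_neg, Int.cast_neg, neg_mul, neg_mul, cos_neg, Int.cast_natCast]
    ring

end CosineSeries

section HalfDisc

/-- The upper half of the open unit disc, onto which the power `z ^ (π / α)` maps the sector of
opening angle `α`. -/
def upperHalfDisc : Set ℂ := {w | ‖w‖ < 1 ∧ 0 < w.im}

lemma isOpen_upperHalfDisc : IsOpen upperHalfDisc :=
  (isOpen_lt continuous_norm continuous_const).inter
    (isOpen_lt continuous_const Complex.continuous_im)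

lemma norm_sum_real_mul_exp_pow_sq (c : ℕ → ℝ) (s : Finset ℕ) (t : ℝ) :
    ‖∑ k ∈ s, (c k : ℂ) * Complex.exp (t * Complex.I) ^ k‖ ^ 2
      = ∑ j ∈ s, ∑ k ∈ s, c j * c k * cos ((j - k : ℤ) * t) := by
  have hterm (k : ℕ) : (c k : ℂ) * Complex.exp (t * Complex.I) ^ k
      = c k * Complex.exp ((k * t : ℝ) * Complex.I) := by
    rw [← Complex.exp_nat_mul]
    push_cast
    rw [mul_assoc]
  simp only [hterm, ← Complex.normSq_eq_norm_sq, Complex.normSq_apply, Complex.re_sum,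
    Complex.im_sum, Complex.re_ofReal_mul, Complex.im_ofReal_mul, Complex.exp_ofReal_mul_I_re,
    Complex.exp_ofReal_mul_I_im, Finset.sum_mul_sum, ← Finset.sum_add_distrib]
  refine Finset.sum_congr rfl fun j _ => Finset.sum_congr rfl fun k _ => ?_
  push_cast
  rw [sub_mul, cos_sub]
  ring

lemma integral_norm_sum_real_mul_exp_pow_sq (c : ℕ → ℝ) (s : Finset ℕ) :
    ∫ t in (0 : ℝ)..π, ‖∑ k ∈ s, (c k : ℂ) * Complex.exp (t * Complex.I) ^ k‖ ^ 2
      = π * ∑ k ∈ s, c k ^ 2 := by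
  have hcos (j k : ℕ) : ∫ t in (0 : ℝ)..π, cos ((j - k : ℤ) * t) = if j = k then π else 0 := by
    split_ifs with hjk
    · simp [hjk]
    · simpa [pi_ne_zero] using
        integral_cos_int_mul_pi_div pi_ne_zero (by omega : (j - k : ℤ) ≠ 0)
  simp only [norm_sum_real_mul_exp_pow_sq]
  rw [intervalIntegral.integral_finsetSum
    fun j _ => Continuous.intervalIntegrable (by fun_prop) _ _, Finset.mul_sum]
  refine Finset.sum_congr rfl fun j hj => ?_
  rw [intervalIntegral.integral_finsetSum
    fun k _ => Continuous.intervalIntegrable (by fun_prop) _ _]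
  simp only [intervalIntegral.integral_const_mul, hcos, mul_ite, mul_zero, Finset.sum_ite_eq,
    if_pos hj]
  ring

lemma polarCoord_symm_mem_upperHalfDisc_iff {p : ℝ × ℝ} (hp : p ∈ polarCoord.target) :
    Complex.polarCoord.symm p ∈ upperHalfDisc ↔ p ∈ Ioo (0 : ℝ) 1 ×ˢ Ioo 0 π := by
  obtain ⟨hr : 0 < p.1, ht⟩ := hp
  have him : (Complex.polarCoord.symm p).im = p.1 * sin p.2 := by
    simp [-Complex.ofReal_cos, -Complex.ofReal_sin]
  have hsin : 0 < sin p.2 ↔ 0 < p.2 :=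
    ⟨fun h => lt_of_not_ge fun hle => h.not_ge (sin_nonpos_of_nonpos_of_neg_pi_le hle ht.1.le),
      fun h => sin_pos_of_pos_of_lt_pi h ht.2⟩
  simp only [upperHalfDisc, mem_ofPred_eq, Complex.norm_polarCoord_symm, abs_of_pos hr, him,
    mul_pos_iff_of_pos_left hr, hsin, mem_prod, mem_Ioo, hr, true_and, ht.2, and_true]

lemma lintegral_upperHalfDisc {f : ℂ → ENNReal} (hf : Measurable f) :
    ∫⁻ w in upperHalfDisc, f w
      = ∫⁻ r in Ioo (0 : ℝ) 1, ∫⁻ t in Ioo 0 π,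
          ENNReal.ofReal r * f (r * Complex.exp (t * Complex.I)) := by
  let F : ℝ × ℝ → ENNReal := fun p => ENNReal.ofReal p.1 * f (p.1 * Complex.exp (p.2 * Complex.I))
  have hrect : Ioo (0 : ℝ) 1 ×ˢ Ioo 0 π ⊆ polarCoord.target :=
    prod_mono (fun r hr => hr.1) (Ioo_subset_Ioo_left (by linarith [pi_pos]))
  have hpolar (p : ℝ × ℝ) (hp : p ∈ polarCoord.target) :
      ENNReal.ofReal p.1 • upperHalfDisc.indicator f (Complex.polarCoord.symm p)
        = (Ioo (0 : ℝ) 1 ×ˢ Ioo 0 π).indicator F p := by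
    have hsymm : Complex.polarCoord.symm p = p.1 * Complex.exp (p.2 * Complex.I) := by
      rw [Complex.polarCoord_symm_apply, Complex.exp_mul_I, Complex.ofReal_cos, Complex.ofReal_sin]
    classical
    simp only [indicator_apply, polarCoord_symm_mem_upperHalfDisc_iff hp, smul_eq_mul, mul_ite,
      mul_zero, F]
    rw [hsymm]
  calc ∫⁻ w in upperHalfDisc, f w
      = ∫⁻ p in polarCoord.target, (Ioo (0 : ℝ) 1 ×ˢ Ioo 0 π).indicator F p := by
        rw [← lintegral_indicator isOpen_upperHalfDisc.measurableSet,
          ← Complex.lintegral_comp_polarCoord_symm]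
        exact setLIntegral_congr_fun polarCoord.open_target.measurableSet hpolar
    _ = ∫⁻ p in Ioo (0 : ℝ) 1 ×ˢ Ioo 0 π, F p := by
        rw [setLIntegral_indicator (measurableSet_Ioo.prod measurableSet_Ioo),
          inter_eq_left.2 hrect]
    _ = ∫⁻ r in Ioo (0 : ℝ) 1, ∫⁻ t in Ioo 0 π,
          ENNReal.ofReal r * f (r * Complex.exp (t * Complex.I)) := by
        rw [Measure.volume_eq_prod]
        exact setLIntegral_prod _ (Measurable.aemeasurable (by fun_prop))

lemma setLIntegral_Ioo_ofReal {f : ℝ → ℝ} {a b : ℝ} (hab : a ≤ b) (hf : ContinuousOn f (Icc a b))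
    (hf0 : ∀ x ∈ Ioo a b, 0 ≤ f x) :
    ∫⁻ x in Ioo a b, ENNReal.ofReal (f x) = ENNReal.ofReal (∫ x in a..b, f x) := by
  rw [intervalIntegral.integral_of_le hab, integral_Ioc_eq_integral_Ioo,
    ofReal_integral_eq_lintegral_ofReal (hf.integrableOn_Icc.mono_set Ioo_subset_Icc_self)
      ((ae_restrict_iff' measurableSet_Ioo).2 (ae_of_all _ hf0))]

lemma lintegral_upperHalfDisc_norm_sum_real_mul_pow_sq (c : ℕ → ℝ) (s : Finset ℕ) :
    ∫⁻ w in upperHalfDisc, ENNReal.ofReal (‖∑ k ∈ s, (c k : ℂ) * w ^ k‖ ^ 2)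
      = ENNReal.ofReal (π / 2 * ∑ k ∈ s, c k ^ 2 / (k + 1)) := by
  have hcircle (r : ℝ) (hr : r ∈ Ioo (0 : ℝ) 1) :
      ∫⁻ t in Ioo 0 π, ENNReal.ofReal r *
          ENNReal.ofReal (‖∑ k ∈ s, (c k : ℂ) * (r * Complex.exp (t * Complex.I)) ^ k‖ ^ 2)
        = ENNReal.ofReal (∑ k ∈ s, π * c k ^ 2 * r ^ (2 * k + 1)) := by
    have hterm (t : ℝ) (k : ℕ) : (c k : ℂ) * (r * Complex.exp (t * Complex.I)) ^ k
        = (c k * r ^ k : ℝ) * Complex.exp (t * Complex.I) ^ k := by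
      push_cast
      ring
    simp only [hterm]
    rw [lintegral_const_mul' _ _ ENNReal.ofReal_ne_top,
      setLIntegral_Ioo_ofReal pi_pos.le (Continuous.continuousOn (by fun_prop))
        fun t _ => sq_nonneg _,
      integral_norm_sum_real_mul_exp_pow_sq, ← ENNReal.ofReal_mul hr.1.le, Finset.mul_sum,
      Finset.mul_sum]
    congr! 2 with k
    ring
  rw [lintegral_upperHalfDisc (by fun_prop), setLIntegral_congr_fun measurableSet_Ioo hcircle,
    setLIntegral_Ioo_ofReal zero_le_one (Continuous.continuousOn (by fun_prop))
      fun r hr => Finset.sum_nonneg fun k _ =>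
        mul_nonneg (by positivity) (pow_nonneg hr.1.le _),
    intervalIntegral.integral_finsetSum
      fun k _ => Continuous.intervalIntegrable (by fun_prop) _ _, Finset.mul_sum]
  congr! 2 with k
  rw [intervalIntegral.integral_const_mul, integral_pow]
  push_cast
  field_simp
  ring

/-- The sum `∑ aₖ wᵏ` of a power series with real coefficients. -/
noncomputable def powerSum (a : ℕ → ℝ) (w : ℂ) : ℂ := ∑' k, (a k : ℂ) * w ^ k

variable {a : ℕ → ℝ}

lemma norm_real_mul_pow_le {w : ℂ} (hw : ‖w‖ ≤ 1) (k : ℕ) : ‖(a k : ℂ) * w ^ k‖ ≤ |a k| := by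
  rw [norm_mul, norm_pow, Complex.norm_real, norm_eq_abs]
  exact mul_le_of_le_one_right (abs_nonneg _) (pow_le_one₀ (norm_nonneg _) hw)

lemma hasSum_powerSum (ha : Summable a) {w : ℂ} (hw : ‖w‖ ≤ 1) :
    HasSum (fun k => (a k : ℂ) * w ^ k) (powerSum a w) :=
  (Summable.of_norm_bounded ha.abs (norm_real_mul_pow_le hw)).hasSum

lemma continuousOn_powerSum (ha : Summable a) :
    ContinuousOn (powerSum a) (Metric.closedBall 0 1) :=
  continuousOn_tsum (fun k => Continuous.continuousOn (by fun_prop)) ha.abs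
    fun k w hw => norm_real_mul_pow_le (mem_closedBall_zero_iff.1 hw) k

lemma differentiableOn_powerSum (ha : Summable a) :
    DifferentiableOn ℂ (powerSum a) (Metric.ball 0 1) :=
  Complex.differentiableOn_tsum_of_summable_norm ha.abs
    (fun k => Differentiable.differentiableOn (by fun_prop)) Metric.isOpen_ball
    fun k w hw => norm_real_mul_pow_le (mem_ball_zero_iff.1 hw).le k

lemma hasSum_deriv_powerSum (ha : Summable a) {w : ℂ} (hw : w ∈ Metric.ball (0 : ℂ) 1) :
    HasSum (fun k : ℕ => (((k + 1) * a (k + 1) : ℝ) : ℂ) * w ^ k) (deriv (powerSum a) w) := by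
  have hderiv := Complex.hasSum_deriv_of_summable_norm ha.abs
    (F := fun k w => (a k : ℂ) * w ^ k)
    (fun k => Differentiable.differentiableOn (by fun_prop)) Metric.isOpen_ball
    (fun k w hw => norm_real_mul_pow_le (mem_ball_zero_iff.1 hw).le k) hw
  have hterm (k : ℕ) : deriv (fun w : ℂ => (a (k + 1) : ℂ) * w ^ (k + 1)) w
      = ((k + 1) * a (k + 1) : ℝ) * w ^ k := by
    rw [deriv_const_mul_field, deriv_pow_field, Nat.add_sub_cancel]
    push_cast
    ring
  rw [← hasSum_nat_add_iff' 1] at hderiv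
  simp only [hterm, Finset.sum_range_one, pow_zero, mul_one, deriv_const, sub_zero] at hderiv
  exact hderiv

lemma lintegral_norm_deriv_powerSum_sq_le (ha : Summable a)
    (ha2 : Summable fun k : ℕ => (k + 1) * a (k + 1) ^ 2) :
    ∫⁻ w in upperHalfDisc, ENNReal.ofReal (‖deriv (powerSum a) w‖ ^ 2)
      ≤ ENNReal.ofReal (π / 2 * ∑' k : ℕ, (k + 1) * a (k + 1) ^ 2) := by
  let D : ℕ → ℂ → ℂ := fun N w =>
    ∑ k ∈ Finset.range N, (((k + 1) * a (k + 1) : ℝ) : ℂ) * w ^ k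
  have hD (w : ℂ) (hw : w ∈ upperHalfDisc) : ENNReal.ofReal (‖deriv (powerSum a) w‖ ^ 2)
      = Filter.liminf (fun N => ENNReal.ofReal (‖D N w‖ ^ 2)) Filter.atTop :=
    ((ENNReal.continuous_ofReal.tendsto _).comp (((hasSum_deriv_powerSum ha
      (mem_ball_zero_iff.2 hw.1)).tendsto_sum_nat.norm).pow 2)).liminf_eq.symm
  have henergy (N : ℕ) : ∫⁻ w in upperHalfDisc, ENNReal.ofReal (‖D N w‖ ^ 2)
      ≤ ENNReal.ofReal (π / 2 * ∑' k : ℕ, (k + 1) * a (k + 1) ^ 2) := by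
    rw [lintegral_upperHalfDisc_norm_sum_real_mul_pow_sq]
    refine ENNReal.ofReal_le_ofReal (mul_le_mul_of_nonneg_left ?_ (by positivity))
    refine le_of_eq_of_le (Finset.sum_congr rfl fun k _ => ?_)
      (ha2.sum_le_tsum (Finset.range N) fun k _ => by positivity)
    field_simp
  rw [setLIntegral_congr_fun isOpen_upperHalfDisc.measurableSet hD]
  exact (lintegral_liminf_le fun N => by fun_prop).trans
    (Filter.liminf_le_of_frequently_le' (Filter.Frequently.of_forall henergy))

end HalfDisc

section ConformalInvariance

lemma det_restrictScalars_toSpanSingleton (c : ℂ) :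
    ((ContinuousLinearMap.toSpanSingleton ℂ c).restrictScalars ℝ).det = ‖c‖ ^ 2 := by
  have hmul : (((ContinuousLinearMap.toSpanSingleton ℂ c).restrictScalars ℝ : ℂ →L[ℝ] ℂ) :
      ℂ →ₗ[ℝ] ℂ) = Algebra.lmul ℝ ℂ c := by
    ext z
    simp [mul_comm]
  rw [ContinuousLinearMap.det, hmul, ← Algebra.norm_apply, Algebra.norm_complex_apply,
    Complex.normSq_eq_norm_sq]

lemma lintegral_norm_deriv_comp_sq {s : Set ℂ} (hs : MeasurableSet s) {h φ : ℂ → ℂ}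
    (hφ : ∀ z ∈ s, DifferentiableAt ℂ φ z) (hinj : InjOn φ s)
    (hh : ∀ z ∈ s, DifferentiableAt ℂ h (φ z)) :
    ∫⁻ z in s, ENNReal.ofReal (‖deriv (h ∘ φ) z‖ ^ 2)
      = ∫⁻ w in φ '' s, ENNReal.ofReal (‖deriv h w‖ ^ 2) := by
  rw [lintegral_image_eq_lintegral_abs_det_fderiv_mul volume hs (fun z hz =>
    ((hφ z hz).hasDerivAt.hasFDerivAt.restrictScalars ℝ).hasFDerivWithinAt) hinj]
  refine setLIntegral_congr_fun hs fun z hz => ?_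
  rw [det_restrictScalars_toSpanSingleton, abs_of_nonneg (sq_nonneg _),
    ← ENNReal.ofReal_mul (sq_nonneg _), deriv_comp z (hh z hz) (hφ z hz), norm_mul, mul_pow,
    mul_comm]

end ConformalInvariance

section SectorMap

/-- The sector of radius `1` and opening angle `α` in the complex plane, as the image under `exp`
of a half strip, on which real powers become dilations. -/
def complexSector (α : ℝ) : Set ℂ := Complex.exp '' (Iio 0 ×ℂ Ioo 0 α)

/-- The branch of `z ^ (π / α)` that is cut along the ray opposite to the bisector of the sector. It
maps the sector conformally onto the upper half disc. -/
noncomputable def sectorMap (α : ℝ) (z : ℂ) : ℂ :=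
  Complex.I * (Complex.exp ((-(α / 2) : ℝ) * Complex.I) * z) ^ ((π / α : ℝ) : ℂ)

variable {α : ℝ}

lemma isOpen_complexSector : IsOpen (complexSector α) :=
  Complex.isOpenMap_exp _ (isOpen_Iio.reProdIm isOpen_Ioo)

lemma log_rotate_exp {ζ : ℂ} (hζ : ζ.im ∈ Ioc (α / 2 - π) (α / 2 + π)) :
    Complex.log (Complex.exp ((-(α / 2) : ℝ) * Complex.I) * Complex.exp ζ)
      = ζ - (α / 2 : ℝ) * Complex.I := by
  have him : ((-(α / 2) : ℝ) * Complex.I + ζ).im = ζ.im - α / 2 := by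
    rw [Complex.add_im, Complex.im_ofReal_mul, Complex.I_im]
    ring
  rw [← Complex.exp_add, Complex.log_exp (by linarith [hζ.1]) (by linarith [hζ.2])]
  push_cast
  ring

lemma sectorMap_exp (hα : 0 < α) {ζ : ℂ} (hζ : ζ.im ∈ Ioc (α / 2 - π) (α / 2 + π)) :
    sectorMap α (Complex.exp ζ) = Complex.exp ((π / α : ℝ) * ζ) := by
  have hα' : (α : ℂ) ≠ 0 := mod_cast hα.ne'
  have hlog := log_rotate_exp hζ
  calc sectorMap α (Complex.exp ζ)
      = Complex.I * Complex.exp ((ζ - (α / 2 : ℝ) * Complex.I) * (π / α : ℝ)) := by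
        rw [sectorMap, Complex.cpow_def_of_ne_zero
          (mul_ne_zero (Complex.exp_ne_zero _) (Complex.exp_ne_zero _)), hlog]
    _ = Complex.exp (π / 2 * Complex.I)
          * Complex.exp ((ζ - (α / 2 : ℝ) * Complex.I) * (π / α : ℝ)) := by
        rw [Complex.exp_pi_div_two_mul_I]
    _ = Complex.exp ((π / α : ℝ) * ζ) := by
        rw [← Complex.exp_add]
        congr 1
        push_cast
        field_simp
        ring

lemma differentiableAt_sectorMap_exp {ζ : ℂ} (hζ : ζ.im ∈ Ioo (α / 2 - π) (α / 2 + π)) :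
    DifferentiableAt ℂ (sectorMap α) (Complex.exp ζ) := by
  have hslit :
      Complex.exp ((-(α / 2) : ℝ) * Complex.I) * Complex.exp ζ ∈ Complex.slitPlane := by
    rw [Complex.mem_slitPlane_iff_arg, ← Complex.log_im, log_rotate_exp (Ioo_subset_Ioc_self hζ),
      Complex.sub_im, Complex.im_ofReal_mul, Complex.I_im, mul_one]
    exact ⟨by linarith [hζ.2], mul_ne_zero (Complex.exp_ne_zero _) (Complex.exp_ne_zero _)⟩
  exact DifferentiableAt.const_mul
    (DifferentiableAt.cpow_const (by fun_prop) hslit) _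

lemma continuousAt_sectorMap_zero (hα : 0 < α) : ContinuousAt (sectorMap α) 0 := by
  have hpow : ContinuousAt (fun z : ℂ => z ^ ((π / α : ℝ) : ℂ))
      (Complex.exp ((-(α / 2) : ℝ) * Complex.I) * 0) :=
    Complex.continuousAt_cpow_const_of_re_pos (by simp) (by rw [Complex.ofReal_re]; positivity)
  exact continuousAt_const.mul (hpow.comp (continuousAt_const.mul continuousAt_id))

lemma pi_div_mul_mem_Ioo (hα : 0 < α) {x : ℝ} (hx : x ∈ Ioo 0 α) : π / α * x ∈ Ioo 0 π := by
  refine ⟨mul_pos (by positivity) hx.1, ?_⟩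
  rw [div_mul_eq_mul_div, div_lt_iff₀ hα]
  exact mul_lt_mul_of_pos_left hx.2 pi_pos

lemma mapsTo_sectorMap (hα : 0 < α) (hα2 : α < 2 * π) :
    MapsTo (sectorMap α) (complexSector α) upperHalfDisc := by
  rintro _ ⟨ζ, ⟨hre : ζ.re < 0, him : ζ.im ∈ Ioo 0 α⟩, rfl⟩
  rw [sectorMap_exp hα ⟨by linarith [him.1], by linarith [him.2]⟩]
  refine ⟨?_, ?_⟩
  · rw [Complex.norm_exp, Complex.re_ofReal_mul, Real.exp_lt_one_iff]
    exact mul_neg_of_pos_of_neg (by positivity) hre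
  · rw [Complex.exp_im, Complex.im_ofReal_mul]
    exact mul_pos (Real.exp_pos _) (sin_pos_of_mem_Ioo (pi_div_mul_mem_Ioo hα him))

lemma injOn_sectorMap (hα : 0 < α) (hα2 : α < 2 * π) :
    InjOn (sectorMap α) (complexSector α) := by
  rintro _ ⟨ζ, ⟨-, hζ : ζ.im ∈ Ioo 0 α⟩, rfl⟩ _ ⟨ξ, ⟨-, hξ : ξ.im ∈ Ioo 0 α⟩, rfl⟩ heq
  have hc : ((π / α : ℝ) : ℂ) ≠ 0 := mod_cast (by positivity)
  rw [sectorMap_exp hα ⟨by linarith [hζ.1], by linarith [hζ.2]⟩,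
    sectorMap_exp hα ⟨by linarith [hξ.1], by linarith [hξ.2]⟩] at heq
  have him {z : ℂ} (hz : z.im ∈ Ioo 0 α) : ((π / α : ℝ) * z).im ∈ Ioo 0 π := by
    rw [Complex.im_ofReal_mul]
    exact pi_div_mul_mem_Ioo hα hz
  rw [mul_left_cancel₀ hc (Complex.exp_inj_of_neg_pi_lt_of_le_pi
    (by linarith [(him hζ).1, pi_pos]) (him hζ).2.le
    (by linarith [(him hξ).1, pi_pos]) (him hξ).2.le heq)]

lemma isBounded_complexSector : Bornology.IsBounded (complexSector α) := by
  refine Metric.isBounded_ball.subset (t := Metric.ball 0 1) ?_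
  rintro _ ⟨ζ, ⟨hre : ζ.re < 0, -⟩, rfl⟩
  rwa [mem_ball_zero_iff, Complex.norm_exp, Real.exp_lt_one_iff]

lemma closure_complexSector_subset :
    closure (complexSector α) ⊆ insert 0 (Complex.exp '' (Iic 0 ×ℂ Icc 0 α)) := by
  let polar : ℝ × ℝ → ℂ := fun p => p.1 * Complex.exp (p.2 * Complex.I)
  have hcompact : IsCompact (polar '' (Icc 0 1 ×ˢ Icc 0 α)) :=
    (isCompact_Icc.prod isCompact_Icc).image (by fun_prop)
  have hpolar (ζ : ℂ) : polar (Real.exp ζ.re, ζ.im) = Complex.exp ζ := by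
    simp only [polar]
    rw [Complex.ofReal_exp, ← Complex.exp_add, Complex.re_add_im]
  have hsub : complexSector α ⊆ polar '' (Icc 0 1 ×ˢ Icc 0 α) := by
    rintro _ ⟨ζ, ⟨hre : ζ.re < 0, him : ζ.im ∈ Ioo 0 α⟩, rfl⟩
    exact ⟨_, ⟨⟨Real.exp_nonneg _, Real.exp_le_one_iff.2 hre.le⟩, Ioo_subset_Icc_self him⟩,
      hpolar ζ⟩
  refine (closure_minimal hsub hcompact.isClosed).trans ?_
  rintro _ ⟨⟨ρ, θ⟩, ⟨⟨hρ0, hρ1⟩, hθ⟩, rfl⟩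
  rcases hρ0.eq_or_lt with rfl | hρ
  · simp [polar]
  · refine .inr ⟨⟨Real.log ρ, θ⟩, ⟨Real.log_nonpos hρ0 hρ1, hθ⟩, ?_⟩
    rw [← hpolar, Real.exp_log hρ]

lemma continuousOn_sectorMap (hα : 0 < α) (hα2 : α < 2 * π) :
    ContinuousOn (sectorMap α) (closure (complexSector α)) := by
  intro z hz
  rcases closure_complexSector_subset hz with rfl | ⟨ζ, ⟨-, hζ : ζ.im ∈ Icc 0 α⟩, rfl⟩
  · exact (continuousAt_sectorMap_zero hα).continuousWithinAt
  · exact (differentiableAt_sectorMap_exp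
      ⟨by linarith [hζ.1], by linarith [hζ.2]⟩).continuousAt.continuousWithinAt

end SectorMap

section SectorSeries

/-- The holomorphic function whose real part is the harmonic extension: the power series with real
coefficients `aₖ` on the half disc, transplanted to the sector. In polar coordinates its real part
is `∑ aₖ ρ ^ (k π / α) cos (k π θ / α)`. -/
noncomputable def sectorSeries (α : ℝ) (a : ℕ → ℝ) : ℂ → ℂ := powerSum a ∘ sectorMap α

variable {α : ℝ} {a : ℕ → ℝ}

lemma upperHalfDisc_subset_ball : upperHalfDisc ⊆ Metric.ball 0 1 :=
  fun _ hw => mem_ball_zero_iff.2 hw.1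

lemma differentiableAt_powerSum (ha : Summable a) {w : ℂ} (hw : w ∈ upperHalfDisc) :
    DifferentiableAt ℂ (powerSum a) w :=
  (differentiableOn_powerSum ha).differentiableAt
    (Metric.isOpen_ball.mem_nhds (upperHalfDisc_subset_ball hw))

lemma differentiableAt_sectorMap (hα2 : α < 2 * π) {z : ℂ} (hz : z ∈ complexSector α) :
    DifferentiableAt ℂ (sectorMap α) z := by
  obtain ⟨ζ, ⟨-, hζ : ζ.im ∈ Ioo 0 α⟩, rfl⟩ := hz
  exact differentiableAt_sectorMap_exp ⟨by linarith [hζ.1], by linarith [hζ.2]⟩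

lemma differentiableOn_sectorSeries (hα : 0 < α) (hα2 : α < 2 * π) (ha : Summable a) :
    DifferentiableOn ℂ (sectorSeries α a) (complexSector α) := fun z hz =>
  ((differentiableAt_powerSum ha (mapsTo_sectorMap hα hα2 hz)).comp z
    (differentiableAt_sectorMap hα2 hz)).differentiableWithinAt

lemma continuousOn_sectorSeries (hα : 0 < α) (hα2 : α < 2 * π) (ha : Summable a) :
    ContinuousOn (sectorSeries α a) (closure (complexSector α)) := by
  have hcont := continuousOn_sectorMap hα hα2
  have hmaps : MapsTo (sectorMap α) (closure (complexSector α)) (Metric.closedBall 0 1) :=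
    ((mapsTo_sectorMap hα hα2).closure_of_continuousOn hcont).mono_right
      ((closure_mono upperHalfDisc_subset_ball).trans Metric.closure_ball_subset_closedBall)
  exact (continuousOn_powerSum ha).comp hcont hmaps

lemma hasSum_re_sectorSeries (hα : 0 < α) (hα2 : α < 2 * π) (ha : Summable a) {θ : ℝ}
    (hθ : θ ∈ Icc 0 α) :
    HasSum (fun k => a k * cos (k * (π / α) * θ))
      (sectorSeries α a (Complex.exp (θ * Complex.I))).re := by
  have him : (θ * Complex.I).im = θ := by rw [Complex.im_ofReal_mul, Complex.I_im, mul_one]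
  have hmap : sectorMap α (Complex.exp (θ * Complex.I))
      = Complex.exp ((π / α * θ : ℝ) * Complex.I) := by
    rw [sectorMap_exp hα ⟨by linarith [hθ.1], by linarith [hθ.2]⟩, ← mul_assoc,
      ← Complex.ofReal_mul]
  have hterm (k : ℕ) : ((a k : ℂ) * Complex.exp ((π / α * θ : ℝ) * Complex.I) ^ k).re
      = a k * cos (k * (π / α) * θ) := by
    rw [← Complex.exp_nat_mul, ← mul_assoc, ← Complex.ofReal_natCast, ← Complex.ofReal_mul,
      Complex.re_ofReal_mul, Complex.exp_ofReal_mul_I_re, mul_assoc (k : ℝ)]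
  have hsum := Complex.hasSum_re
    (hasSum_powerSum ha (Complex.norm_exp_ofReal_mul_I (π / α * θ)).le)
  simp only [hterm] at hsum
  rwa [sectorSeries, Function.comp_apply, hmap]

lemma lintegral_norm_deriv_sectorSeries_sq_le (hα : 0 < α) (hα2 : α < 2 * π) (ha : Summable a)
    (ha2 : Summable fun k : ℕ => (k + 1) * a (k + 1) ^ 2) :
    ∫⁻ z in complexSector α, ENNReal.ofReal (‖deriv (sectorSeries α a) z‖ ^ 2)
      ≤ ENNReal.ofReal (π / 2 * ∑' k : ℕ, (k + 1) * a (k + 1) ^ 2) :=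
  calc ∫⁻ z in complexSector α, ENNReal.ofReal (‖deriv (sectorSeries α a) z‖ ^ 2)
      = ∫⁻ w in sectorMap α '' complexSector α, ENNReal.ofReal (‖deriv (powerSum a) w‖ ^ 2) :=
        lintegral_norm_deriv_comp_sq isOpen_complexSector.measurableSet
          (fun _ => differentiableAt_sectorMap hα2) (injOn_sectorMap hα hα2)
          fun _ hz => differentiableAt_powerSum ha (mapsTo_sectorMap hα hα2 hz)
    _ ≤ ∫⁻ w in upperHalfDisc, ENNReal.ofReal (‖deriv (powerSum a) w‖ ^ 2) :=
        lintegral_mono_set (mapsTo_sectorMap hα hα2).image_subset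
    _ ≤ ENNReal.ofReal (π / 2 * ∑' k : ℕ, (k + 1) * a (k + 1) ^ 2) :=
        lintegral_norm_deriv_powerSum_sq_le ha ha2

end SectorSeries

section RealPart

variable {E : Type*} [NormedAddCommGroup E] [NormedSpace ℝ E] (L : E →L[ℝ] ℂ) {f : ℂ → ℂ}
  {U : Set ℂ}

lemma hasFDerivAt_re_comp {c : ℂ} {x : E} (hf : HasDerivAt f c (L x)) :
    HasFDerivAt (fun y => (f (L y)).re) (Complex.reCLM.comp (c • L)) x :=
  Complex.reCLM.hasFDerivAt.comp x (hf.comp_hasFDerivAt_of_eq x L.hasFDerivAt rfl)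

lemma fderiv_re_comp (hU : IsOpen U) (hf : DifferentiableOn ℂ f U) {x : E} (hx : L x ∈ U) :
    fderiv ℝ (fun y => (f (L y)).re) x = Complex.reCLM.comp (deriv f (L x) • L) :=
  (hasFDerivAt_re_comp L (hf.differentiableAt (hU.mem_nhds hx)).hasDerivAt).fderiv

lemma fderiv_fderiv_re_comp_apply (hU : IsOpen U) (hf : DifferentiableOn ℂ f U) {x : E}
    (hx : L x ∈ U) (e : E) :
    fderiv ℝ (fun z => fderiv ℝ (fun y => (f (L y)).re) z e) x e
      = (deriv (deriv f) (L x) * L e ^ 2).re := by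
  have hfirst : (fun z => fderiv ℝ (fun y => (f (L y)).re) z e)
      =ᶠ[nhds x] fun z => (deriv f (L z) * L e).re := by
    filter_upwards [(hU.preimage L.continuous).mem_nhds hx] with z hz
    rw [fderiv_re_comp L hU hf hz]
    rfl
  have hsecond := ((hf.deriv hU).differentiableAt (hU.mem_nhds hx)).hasDerivAt.mul_const (L e)
  rw [hfirst.fderiv_eq, (hasFDerivAt_re_comp L hsecond).fderiv, sq, ← mul_assoc]
  rfl

lemma fderiv_fderiv_re_comp_add_eq_zero (hU : IsOpen U) (hf : DifferentiableOn ℂ f U) {x : E}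
    (hx : L x ∈ U) {e e' : E} (he : L e' = Complex.I * L e) :
    fderiv ℝ (fun z => fderiv ℝ (fun y => (f (L y)).re) z e) x e
      + fderiv ℝ (fun z => fderiv ℝ (fun y => (f (L y)).re) z e') x e' = 0 := by
  rw [fderiv_fderiv_re_comp_apply L hU hf hx, fderiv_fderiv_re_comp_apply L hU hf hx,
    ← Complex.add_re, he, mul_pow, Complex.I_sq, neg_one_mul, mul_neg, add_neg_cancel,
    Complex.zero_re]

lemma contDiffOn_re_comp {n : WithTop ℕ∞} (hU : IsOpen U) (hf : DifferentiableOn ℂ f U) :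
    ContDiffOn ℝ n (fun y => (f (L y)).re) (L ⁻¹' U) :=
  Complex.reCLM.contDiff.comp_contDiffOn
    (((hf.contDiffOn hU).restrict_scalars ℝ).comp L.contDiff.contDiffOn (mapsTo_preimage L U))

lemma lintegral_norm_fderiv_re_comp_sq_le {F : Type*} [NormedAddCommGroup F]
    [InnerProductSpace ℝ F] [FiniteDimensional ℝ F] [MeasurableSpace F] [BorelSpace F]
    (L : F ≃ₗᵢ[ℝ] ℂ) (hU : IsOpen U) (hf : DifferentiableOn ℂ f U) :
    ∫⁻ x in L ⁻¹' U, ENNReal.ofReal (‖fderiv ℝ (fun y => (f (L y)).re) x‖ ^ 2)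
      ≤ ∫⁻ z in U, ENNReal.ofReal (‖deriv f z‖ ^ 2) := by
  let L' : F →L[ℝ] ℂ := L.toContinuousLinearEquiv
  have hnorm (x : F) (hx : x ∈ L ⁻¹' U) :
      ‖fderiv ℝ (fun y => (f (L y)).re) x‖ ≤ ‖deriv f (L x)‖ := by
    have hL' : ‖L'‖ ≤ 1 := L.toLinearIsometry.norm_toContinuousLinearMap_le
    calc ‖fderiv ℝ (fun y => (f (L y)).re) x‖
        = ‖Complex.reCLM.comp (deriv f (L x) • L')‖ :=
          congrArg norm (fderiv_re_comp L' hU hf hx)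
      _ ≤ ‖Complex.reCLM‖ * ‖deriv f (L x) • L'‖ := ContinuousLinearMap.opNorm_comp_le _ _
      _ ≤ ‖deriv f (L x)‖ := by
          rw [Complex.reCLM_norm, one_mul, norm_smul]
          exact mul_le_of_le_one_right (norm_nonneg _) hL'
  calc ∫⁻ x in L ⁻¹' U, ENNReal.ofReal (‖fderiv ℝ (fun y => (f (L y)).re) x‖ ^ 2)
      ≤ ∫⁻ x in L ⁻¹' U, ENNReal.ofReal (‖deriv f (L x)‖ ^ 2) :=
        setLIntegral_mono' (hU.preimage L.continuous).measurableSet fun x hx => by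
          gcongr
          exact hnorm x hx
    _ = ∫⁻ z in U, ENNReal.ofReal (‖deriv f z‖ ^ 2) :=
        L.measurePreserving.setLIntegral_comp_preimage_emb L.toHomeomorph.measurableEmbedding
          (fun z => ENNReal.ofReal (‖deriv f z‖ ^ 2)) U

end RealPart

lemma integrable_and_integral_le_of_lintegral_ofReal_le {X : Type*} [MeasurableSpace X]
    {μ : Measure X} {f : X → ℝ} {C : ℝ} (hfm : AEStronglyMeasurable f μ) (hf : 0 ≤ᵐ[μ] f)
    (hC : 0 ≤ C) (hle : ∫⁻ x, ENNReal.ofReal (f x) ∂μ ≤ ENNReal.ofReal C) :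
    Integrable f μ ∧ ∫ x, f x ∂μ ≤ C := by
  refine ⟨⟨hfm, ?_⟩, ?_⟩
  · rw [hasFiniteIntegral_iff_ofReal hf]
    exact hle.trans_lt ENNReal.ofReal_lt_top
  · rw [integral_eq_lintegral_of_nonneg_ae hf hfm]
    exact ENNReal.toReal_le_of_le_ofReal hC hle

section Plane

/-- The Euclidean plane as the complex plane, `(x, y) ↦ x + y i`. -/
noncomputable def planeEquiv : EuclideanSpace ℝ (Fin 2) ≃ₗᵢ[ℝ] ℂ :=
  Complex.orthonormalBasisOneI.repr.symm

lemma planeEquiv_apply (x : EuclideanSpace ℝ (Fin 2)) :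
    planeEquiv x = x 0 + x 1 * Complex.I := by
  rw [planeEquiv, ← OrthonormalBasis.sum_repr_symm]
  simp

lemma planeEquiv_polar (ρ θ : ℝ) :
    planeEquiv ((WithLp.equiv 2 (Fin 2 → ℝ)).symm ![ρ * cos θ, ρ * sin θ])
      = ρ * Complex.exp (θ * Complex.I) := by
  rw [planeEquiv_apply, Complex.exp_mul_I, mul_add, ← mul_assoc]
  simp

variable {α : ℝ}

lemma sector_eq_preimage : sector α = planeEquiv ⁻¹' complexSector α := by
  ext x
  constructor
  · rintro ⟨ρ, ⟨hρ0, hρ1⟩, θ, hθ, rfl⟩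
    refine ⟨⟨Real.log ρ, θ⟩, ⟨Real.log_neg hρ0 hρ1, hθ⟩, ?_⟩
    rw [planeEquiv_polar, Complex.mk_eq_add_mul_I, Complex.exp_add, ← Complex.ofReal_exp,
      Real.exp_log hρ0]
  · rintro ⟨ζ, ⟨hre : ζ.re < 0, him : ζ.im ∈ Ioo 0 α⟩, hζ⟩
    refine ⟨Real.exp ζ.re, ⟨Real.exp_pos _, Real.exp_lt_one_iff.2 hre⟩, ζ.im, him,
      planeEquiv.injective ?_⟩
    rw [planeEquiv_polar, ← hζ, Complex.ofReal_exp, ← Complex.exp_add, Complex.re_add_im]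

lemma closure_sector : closure (sector α) = planeEquiv ⁻¹' closure (complexSector α) := by
  rw [sector_eq_preimage]
  exact (planeEquiv.toHomeomorph.preimage_closure _).symm

lemma isCompact_closure_sector : IsCompact (closure (sector α)) := by
  rw [closure_sector]
  exact planeEquiv.toHomeomorph.isCompact_preimage.2 isBounded_complexSector.isCompact_closure

/-- The harmonic function on the sector with boundary values `∑ aₖ cos (k π θ / α)` on the arc. -/
noncomputable def harmonicExtension (α : ℝ) (a : ℕ → ℝ) (x : EuclideanSpace ℝ (Fin 2)) : ℝ :=
  (sectorSeries α a (planeEquiv x)).re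

variable {a : ℕ → ℝ}

lemma continuousOn_harmonicExtension (hα : 0 < α) (hα2 : α < 2 * π) (ha : Summable a) :
    ContinuousOn (harmonicExtension α a) (closure (sector α)) :=
  Complex.continuous_re.comp_continuousOn ((continuousOn_sectorSeries hα hα2 ha).comp
    planeEquiv.continuous.continuousOn closure_sector.subset)

lemma contDiffOn_harmonicExtension (hα : 0 < α) (hα2 : α < 2 * π) (ha : Summable a)
    {n : WithTop ℕ∞} : ContDiffOn ℝ n (harmonicExtension α a) (sector α) := by
  let L : EuclideanSpace ℝ (Fin 2) →L[ℝ] ℂ := planeEquiv.toContinuousLinearEquiv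
  rw [sector_eq_preimage]
  exact contDiffOn_re_comp L isOpen_complexSector
    (differentiableOn_sectorSeries hα hα2 ha)

lemma laplacian_harmonicExtension (hα : 0 < α) (hα2 : α < 2 * π) (ha : Summable a)
    {x : EuclideanSpace ℝ (Fin 2)} (hx : x ∈ sector α) :
    fderiv ℝ (fun z => fderiv ℝ (harmonicExtension α a) z (EuclideanSpace.single 0 1)) x
        (EuclideanSpace.single 0 1)
      + fderiv ℝ (fun z => fderiv ℝ (harmonicExtension α a) z (EuclideanSpace.single 1 1)) x
        (EuclideanSpace.single 1 1) = 0 := by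
  rw [sector_eq_preimage] at hx
  let L : EuclideanSpace ℝ (Fin 2) →L[ℝ] ℂ := planeEquiv.toContinuousLinearEquiv
  have hrotate : L (EuclideanSpace.single 1 1) = Complex.I * L (EuclideanSpace.single 0 1) := by
    simp [L, planeEquiv_apply]
  exact fderiv_fderiv_re_comp_add_eq_zero L isOpen_complexSector
    (differentiableOn_sectorSeries hα hα2 ha) hx hrotate

lemma hasSum_harmonicExtension (hα : 0 < α) (hα2 : α < 2 * π) (ha : Summable a) {θ : ℝ}
    (hθ : θ ∈ Icc 0 α) :
    HasSum (fun k => a k * cos (k * (π / α) * θ))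
      (harmonicExtension α a ((WithLp.equiv 2 (Fin 2 → ℝ)).symm ![cos θ, sin θ])) := by
  have hpolar := planeEquiv_polar 1 θ
  rw [one_mul, one_mul, Complex.ofReal_one, one_mul] at hpolar
  rw [harmonicExtension, hpolar]
  exact hasSum_re_sectorSeries hα hα2 ha hθ

lemma lintegral_norm_fderiv_harmonicExtension_sq_le (hα : 0 < α) (hα2 : α < 2 * π)
    (ha : Summable a) (ha2 : Summable fun k : ℕ => (k + 1) * a (k + 1) ^ 2) :
    ∫⁻ x in sector α, ENNReal.ofReal (‖fderiv ℝ (harmonicExtension α a) x‖ ^ 2)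
      ≤ ENNReal.ofReal (π / 2 * ∑' k : ℕ, (k + 1) * a (k + 1) ^ 2) := by
  rw [sector_eq_preimage]
  exact (lintegral_norm_fderiv_re_comp_sq_le planeEquiv isOpen_complexSector
    (differentiableOn_sectorSeries hα hα2 ha)).trans
    (lintegral_norm_deriv_sectorSeries_sq_le hα hα2 ha ha2)

lemma integrableOn_and_integral_norm_fderiv_harmonicExtension_sq_le (hα : 0 < α)
    (hα2 : α < 2 * π) (ha : Summable a) {C : ℝ}
    (hC : ∀ s : Finset ℕ, ∑ k ∈ s, (k + 1) * a (k + 1) ^ 2 ≤ C) :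
    IntegrableOn (fun x => ‖fderiv ℝ (harmonicExtension α a) x‖ ^ 2) (sector α) ∧
      ∫ x in sector α, ‖fderiv ℝ (harmonicExtension α a) x‖ ^ 2 ≤ π / 2 * C := by
  have hterm (k : ℕ) : 0 ≤ (k + 1) * a (k + 1) ^ 2 := by positivity
  have hC0 : 0 ≤ C := by simpa only [Finset.sum_empty] using hC ∅
  have hle := lintegral_norm_fderiv_harmonicExtension_sq_le hα hα2 ha (summable_of_sum_le hterm hC)
  refine integrable_and_integral_le_of_lintegral_ofReal_le
    ((measurable_fderiv ℝ _).norm.pow_const 2).aestronglyMeasurable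
    (ae_of_all _ fun x => sq_nonneg _) (by positivity)
    (hle.trans (ENNReal.ofReal_le_ofReal ?_))
  gcongr
  exact Real.tsum_le_of_sum_le hterm hC

end Plane

/-- every `g ∈ W^{1,2}((0,α))` on the boundary arc `{ρ = 1, 0 ≤ θ ≤ α}`
of the sector `V` (with `0 < α < 2π`) admits a harmonic extension `v ∈ W^{1,2}(V)`
with `∫_V |∇v|² ≤ (α/π) ∫₀^α |g′|²`. -/
theorem stmt1 (α : ℝ) (hα : 0 < α) (hα2 : α < 2*π)
    (g g' : ℝ → ℝ)
    (hftc : ∀ x ∈ Set.Icc (0:ℝ) α, ∀ y ∈ Set.Icc (0:ℝ) α,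
      g y - g x = ∫ t in x..y, g' t)
    (hg'1 : IntervalIntegrable g' volume 0 α)
    (hg'2 : IntervalIntegrable (fun t => (g' t)^2) volume 0 α) :
    ∃ v : EuclideanSpace ℝ (Fin 2) → ℝ,
      ContinuousOn v (closure (sector α)) ∧
      ContDiffOn ℝ 2 v (sector α) ∧
      (∀ x ∈ sector α,
        (fderiv ℝ (fun z => fderiv ℝ v z (EuclideanSpace.single 0 1)) x)
            (EuclideanSpace.single 0 1)
          + (fderiv ℝ (fun z => fderiv ℝ v z (EuclideanSpace.single 1 1)) x)
            (EuclideanSpace.single 1 1) = 0) ∧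
      (∀ θ ∈ Set.Icc (0:ℝ) α, v ((WithLp.equiv 2 (Fin 2 → ℝ)).symm ![Real.cos θ, Real.sin θ]) = g θ) ∧
      IntegrableOn (fun x => (v x)^2) (sector α) volume ∧
      IntegrableOn (fun x => ‖fderiv ℝ v x‖^2) (sector α) volume ∧
      (∫ x in sector α, ‖fderiv ℝ v x‖^2) ≤ (α/π) * ∫ θ in (0:ℝ)..α, (g' θ)^2 := by
  have hg (x : ℝ) (hx : x ∈ Icc 0 α) : g x = g 0 + ∫ t in (0 : ℝ)..x, g' t :=
    sub_eq_iff_eq_add'.1 (hftc 0 (left_mem_Icc.2 hα.le) x hx)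
  have hgcont : ContinuousOn g (Icc 0 α) := by
    rw [← uIcc_of_le hα.le] at hg ⊢
    exact continuousOn_of_primitive hg hg'1
  have hsum : Summable (cosCoeff α g) := summable_of_summable_sq_succ_mul
    (summable_of_sum_le (fun _ => sq_nonneg _) (sum_sq_succ_mul_cosCoeff_le hα hg hg'1 hg'2))
  have hcont := continuousOn_harmonicExtension hα hα2 hsum
  obtain ⟨hgrad, henergy⟩ := integrableOn_and_integral_norm_fderiv_harmonicExtension_sq_le hα hα2
    hsum (sum_succ_mul_cosCoeff_sq_le hα hg hg'1 hg'2)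
  refine ⟨harmonicExtension α (cosCoeff α g), hcont, contDiffOn_harmonicExtension hα hα2 hsum,
    fun x hx => laplacian_harmonicExtension hα hα2 hsum hx,
    fun θ hθ => (hasSum_harmonicExtension hα hα2 hsum hθ).unique
      (hasSum_cosCoeff hα hgcont hsum hθ),
    ((hcont.pow 2).integrableOn_compact isCompact_closure_sector).mono_set subset_closure,
    hgrad, henergy.trans_eq ?_⟩
  field_simp
end

section
/- Let h : [0,3] → ℝ be a nonnegative convex integrable function satisfying the distributional inequality h'' ≥ h on (0,3), and suppose h is not identically zero. There exists a universal constant η ∈ (0,1), independent of h, such that: if ∫₁² h ≥ (1−η)∫₀¹ h, then ∫₂³ h ≥ (1+η)∫₁² h. -/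
open Real MeasureTheory Set

/-!
For a bump function `w ≤ 1` supported in the interior of `[1, 2]`, integrating `w` twice over a
sliding window of length `1` yields a test function `φ` on `(0, 3)` with
`φ'' t = w (t + 1) - 2 w t + w (t - 1)`. Testing `h'' ≥ h` against `φ` and moving the second
difference onto `h` gives `∫ h φ ≤ ∫₁² (h (t + 1) - 2 h t + h (t - 1)) w t dt`. The second
difference of the convex function `h` is nonnegative, so `w` may be replaced by `1` on the right,
while `φ ≥ c > 0` on `[1, 2]`. With `A, B, C` the integrals of `h` over the three unit intervals,
this reads `c B ≤ C - 2 B + A`, and `η = c / (c + 2)` works.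
-/

open Metric Function

open scoped ContDiff

/-- The symmetric second difference of `f` with step `s`, the discrete analogue of `s ^ 2 * f''`. -/
def secondDiff (s : ℝ) (f : ℝ → ℝ) (t : ℝ) : ℝ :=
  f (t + s) - 2 * f t + f (t - s)

/-- The integral of `f` over the window of radius `r` centred at `t` (the Steklov average of `f`
without its normalising factor). Applying it twice to a bump function produces the test functions
whose second derivative is a second difference. -/
noncomputable def slidingIntegral (r : ℝ) (f : ℝ → ℝ) (t : ℝ) : ℝ :=
  ∫ u in (t - r)..(t + r), f u

/-- The inequality `f'' ≥ g` on `U` in the sense of distributions, tested against nonnegative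
smooth functions with compact support in `U`. -/
def DistribSecondDerivGE (U : Set ℝ) (f g : ℝ → ℝ) : Prop :=
  ∀ φ : ℝ → ℝ, ContDiff ℝ ∞ φ → HasCompactSupport φ → tsupport φ ⊆ U → (∀ t, 0 ≤ φ t) →
    ∫ t in U, g t * φ t ≤ ∫ t in U, f t * deriv (deriv φ) t

section SecondDiff

variable {f g : ℝ → ℝ} {s t a b : ℝ} {K U : Set ℝ}

lemma secondDiff_nonneg_of_convexOn (hf : ConvexOn ℝ U f) (hl : t - s ∈ U) (hr : t + s ∈ U) :
    0 ≤ secondDiff s f t := by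
  have midpoint_le := hf.2 hl hr (by norm_num : (0 : ℝ) ≤ 1 / 2) (by norm_num : (0 : ℝ) ≤ 1 / 2)
    (by norm_num)
  have midpoint_eq : (1 / 2 : ℝ) • (t - s) + (1 / 2 : ℝ) • (t + s) = t := by
    simp only [smul_eq_mul]; ring
  rw [midpoint_eq] at midpoint_le
  simp only [smul_eq_mul] at midpoint_le
  unfold secondDiff
  linarith

lemma secondDiff_indicator (ht : t - s ∈ U ∧ t ∈ U ∧ t + s ∈ U) :
    secondDiff s (U.indicator f) t = secondDiff s f t := by
  obtain ⟨hl, hm, hr⟩ := ht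
  simp only [secondDiff, indicator_of_mem hl, indicator_of_mem hm, indicator_of_mem hr]

lemma integrable_secondDiff (hf : Integrable f) (s : ℝ) : Integrable (secondDiff s f) :=
  ((hf.comp_add_right s).sub (hf.const_mul 2)).add (hf.comp_sub_right s)

lemma integrableOn_secondDiff (hU : MeasurableSet U) (hK : MeasurableSet K)
    (hf : IntegrableOn f U) (hKU : ∀ t ∈ K, t - s ∈ U ∧ t ∈ U ∧ t + s ∈ U) :
    IntegrableOn (secondDiff s f) K :=
  (integrable_secondDiff (hf.integrable_indicator hU) s).integrableOn.congr_fun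
    (fun t ht ↦ secondDiff_indicator (hKU t ht)) hK

lemma integral_secondDiff (hl : IntervalIntegrable f volume (a - s) (b - s))
    (hm : IntervalIntegrable f volume a b) (hr : IntervalIntegrable f volume (a + s) (b + s)) :
    ∫ t in a..b, secondDiff s f t =
      (∫ t in (a + s)..(b + s), f t) - 2 * (∫ t in a..b, f t) + ∫ t in (a - s)..(b - s), f t := by
  have hr' := hr.comp_add_right s
  have hl' := hl.comp_sub_right s
  simp only [add_sub_cancel_right, sub_add_cancel] at hr' hl'
  simp only [secondDiff]
  rw [intervalIntegral.integral_add (hr'.sub (hm.const_mul 2)) hl',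
    intervalIntegral.integral_sub hr' (hm.const_mul 2), intervalIntegral.integral_const_mul,
    intervalIntegral.integral_comp_add_right f, intervalIntegral.integral_comp_sub_right f]

lemma integral_sub_two_mul_add {α : Type*} [MeasurableSpace α] {μ : Measure α} {F G H : α → ℝ}
    (hF : Integrable F μ) (hG : Integrable G μ) (hH : Integrable H μ) :
    ∫ x, F x - 2 * G x + H x ∂μ = ∫ x, F x ∂μ - 2 * ∫ x, G x ∂μ + ∫ x, H x ∂μ := by
  rw [integral_add (f := fun x ↦ F x - 2 * G x) (hF.sub (hG.const_mul 2)) hH,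
    integral_sub hF (hG.const_mul 2), integral_const_mul]

lemma integral_mul_secondDiff (hf : Integrable f) (hg : Continuous g)
    (hgc : HasCompactSupport g) (s : ℝ) :
    ∫ t, f t * secondDiff s g t = ∫ t, secondDiff s f t * g t := by
  obtain ⟨C, hC⟩ := hg.bounded_above_of_compact_support hgc
  have int_mul {F : ℝ → ℝ} (hF : Integrable F) (d : ℝ) : Integrable fun t ↦ F t * g (t + d) :=
    hF.mul_bdd (by fun_prop) (ae_of_all _ fun t ↦ hC (t + d))
  have int_right := int_mul hf s
  have int_mid : Integrable fun t ↦ f t * g t := by simpa using int_mul hf 0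
  have int_left : Integrable fun t ↦ f t * g (t - s) := int_mul hf (-s)
  have int_right' : Integrable fun t ↦ f (t + s) * g t := by
    simpa using int_mul (hf.comp_add_right s) 0
  have int_left' : Integrable fun t ↦ f (t - s) * g t := by
    simpa using int_mul (hf.comp_sub_right s) 0
  have shift_right : ∫ t, f t * g (t + s) = ∫ t, f (t - s) * g t := by
    simpa using integral_add_right_eq_self (fun t ↦ f (t - s) * g t) s
  have shift_left : ∫ t, f t * g (t - s) = ∫ t, f (t + s) * g t := by
    simpa using integral_sub_right_eq_self (fun t ↦ f (t + s) * g t) s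
  calc ∫ t, f t * secondDiff s g t
      = ∫ t, f t * g (t + s) - 2 * (f t * g t) + f t * g (t - s) := by
        congr 1 with t; unfold secondDiff; ring
    _ = (∫ t, f t * g (t + s)) - 2 * (∫ t, f t * g t) + ∫ t, f t * g (t - s) :=
        integral_sub_two_mul_add int_right int_mid int_left
    _ = (∫ t, f (t + s) * g t) - 2 * (∫ t, f t * g t) + ∫ t, f (t - s) * g t := by
        linarith
    _ = ∫ t, f (t + s) * g t - 2 * (f t * g t) + f (t - s) * g t :=
        (integral_sub_two_mul_add int_right' int_mid int_left').symm
    _ = ∫ t, secondDiff s f t * g t := by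
        congr 1 with t; unfold secondDiff; ring

lemma setIntegral_mul_secondDiff (hU : MeasurableSet U) (hf : IntegrableOn f U)
    (hg : Continuous g) (hgc : HasCompactSupport g)
    (hgU : ∀ t ∈ support g, t - s ∈ U ∧ t ∈ U ∧ t + s ∈ U) :
    ∫ t in U, f t * secondDiff s g t = ∫ t, secondDiff s f t * g t := by
  calc ∫ t in U, f t * secondDiff s g t
      = ∫ t, U.indicator f t * secondDiff s g t := by
        rw [← integral_indicator hU]
        simp only [indicator_mul_left]
    _ = ∫ t, secondDiff s (U.indicator f) t * g t :=
        integral_mul_secondDiff (hf.integrable_indicator hU) hg hgc s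
    _ = ∫ t, secondDiff s f t * g t := by
        congr 1 with t
        by_cases ht : g t = 0
        · simp only [ht, mul_zero]
        · rw [secondDiff_indicator (hgU t ht)]

end SecondDiff

section SlidingIntegral

variable {f : ℝ → ℝ} {r t m ρ : ℝ}

lemma hasDerivAt_slidingIntegral (hf : Continuous f) (r t : ℝ) :
    HasDerivAt (slidingIntegral r f) (f (t + r) - f (t - r)) t := by
  have hasDerivAt_primitive (x : ℝ) : HasDerivAt (fun y ↦ ∫ u in (0 : ℝ)..y, f u) (f x) x :=
    intervalIntegral.integral_hasDerivAt_right (hf.intervalIntegrable _ _)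
      hf.aestronglyMeasurable.stronglyMeasurableAtFilter hf.continuousAt
  have eq_sub_primitive : slidingIntegral r f =
      fun x ↦ (∫ u in (0 : ℝ)..(x + r), f u) - ∫ u in (0 : ℝ)..(x - r), f u :=
    funext fun x ↦ (intervalIntegral.integral_interval_sub_left (hf.intervalIntegrable _ _)
      (hf.intervalIntegrable _ _)).symm
  rw [eq_sub_primitive]
  exact ((hasDerivAt_primitive (t + r)).comp_add_const t r).sub
    ((hasDerivAt_primitive (t - r)).comp_sub_const t r)

lemma deriv_slidingIntegral (hf : Continuous f) (r : ℝ) :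
    deriv (slidingIntegral r f) = fun t ↦ f (t + r) - f (t - r) :=
  funext fun t ↦ (hasDerivAt_slidingIntegral hf r t).deriv

lemma contDiff_slidingIntegral (hf : ContDiff ℝ ∞ f) (r : ℝ) :
    ContDiff ℝ ∞ (slidingIntegral r f) := by
  rw [contDiff_infty_iff_deriv, deriv_slidingIntegral hf.continuous]
  exact ⟨fun t ↦ (hasDerivAt_slidingIntegral hf.continuous r t).differentiableAt, by fun_prop⟩

lemma deriv_deriv_slidingIntegral_slidingIntegral (hf : ContDiff ℝ ∞ f) (r : ℝ) :
    deriv (deriv (slidingIntegral r (slidingIntegral r f))) = secondDiff (2 * r) f := by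
  rw [deriv_slidingIntegral (contDiff_slidingIntegral hf r).continuous]
  funext t
  have deriv_eq := (((hasDerivAt_slidingIntegral hf.continuous r (t + r)).comp_add_const t r).sub
    ((hasDerivAt_slidingIntegral hf.continuous r (t - r)).comp_sub_const t r)).deriv
  refine deriv_eq.trans ?_
  rw [add_sub_cancel_right, sub_add_cancel, add_assoc t r r, sub_sub t r r, ← two_mul, secondDiff]
  ring

lemma slidingIntegral_nonneg (hf : ∀ u, 0 ≤ f u) (hr : 0 ≤ r) (t : ℝ) :
    0 ≤ slidingIntegral r f t :=
  intervalIntegral.integral_nonneg (by linarith) fun u _ ↦ hf u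

lemma slidingIntegral_pos (hf : Continuous f) (hf₀ : ∀ u, 0 ≤ f u) (hm : 0 < f m) (hr : 0 < r)
    (ht : t ∈ closedBall m r) : 0 < slidingIntegral r f t := by
  rw [mem_closedBall_comm, Real.closedBall_eq_Icc] at ht
  exact intervalIntegral.integral_pos (by linarith) hf.continuousOn (fun u _ ↦ hf₀ u) ⟨m, ht, hm⟩

lemma support_slidingIntegral_subset (hf : support f ⊆ closedBall m ρ) (hr : 0 ≤ r) :
    support (slidingIntegral r f) ⊆ closedBall m (ρ + r) := by
  intro t ht
  by_contra ht_far
  refine ht (intervalIntegral.integral_zero_ae (ae_of_all _ fun u hu ↦ ?_))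
  rw [uIoc_of_le (by linarith)] at hu
  have ht_near_u : dist t u ≤ r := by
    rw [Real.dist_eq, abs_le]; constructor <;> linarith [hu.1, hu.2]
  by_contra hu₀
  exact ht_far (mem_closedBall.2 (by linarith [dist_triangle t u m, mem_closedBall.1 (hf hu₀)]))

lemma exists_pos_le_slidingIntegral_slidingIntegral (hf : ContDiff ℝ ∞ f) (hf₀ : ∀ u, 0 ≤ f u)
    (hm : 0 < f m) (hr : 0 < r) :
    ∃ c > 0, ∀ t ∈ closedBall m r, c ≤ slidingIntegral r (slidingIntegral r f) t := by
  have hcont := (contDiff_slidingIntegral hf r).continuous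
  have hcont₂ := (contDiff_slidingIntegral (contDiff_slidingIntegral hf r) r).continuous
  have hpos : 0 < slidingIntegral r f m :=
    slidingIntegral_pos hf.continuous hf₀ hm hr (mem_closedBall_self hr.le)
  exact (isCompact_closedBall m r).exists_forall_le' hcont₂.continuousOn fun t ht ↦
    slidingIntegral_pos hcont (slidingIntegral_nonneg hf₀ hr.le) hpos hr ht

end SlidingIntegral

section WeightedIntegral

variable {α : Type*} [MeasurableSpace α] {μ : Measure α} {f g : α → ℝ} {K U : Set α}

lemma integral_mul_le_setIntegral (hU : MeasurableSet U) (hf : IntegrableOn f U μ)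
    (hf₀ : ∀ x ∈ U, 0 ≤ f x) (hg₀ : ∀ x, 0 ≤ g x) (hg₁ : ∀ x, g x ≤ 1) (hgU : support g ⊆ U) :
    ∫ x, f x * g x ∂μ ≤ ∫ x in U, f x ∂μ := by
  have vanish_off_U (x : α) (hx : x ∉ U) : f x * g x = 0 := by
    rw [notMem_support.1 fun hgx ↦ hx (hgU hgx), mul_zero]
  rw [← setIntegral_eq_integral_of_forall_compl_eq_zero vanish_off_U]
  exact integral_mono_of_nonneg
    (ae_restrict_of_forall_mem hU fun x hx ↦ mul_nonneg (hf₀ x hx) (hg₀ x)) hf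
    (ae_restrict_of_forall_mem hU fun x hx ↦ mul_le_of_le_one_right (hf₀ x hx) (hg₁ x))

lemma mul_setIntegral_le_setIntegral_mul {c : ℝ} (hK : MeasurableSet K) (hU : MeasurableSet U)
    (hKU : K ⊆ U) (hf : IntegrableOn f K μ) (hfg : IntegrableOn (fun x ↦ f x * g x) U μ)
    (hf₀ : ∀ x ∈ U, 0 ≤ f x) (hg₀ : ∀ x, 0 ≤ g x) (hcg : ∀ x ∈ K, c ≤ g x) :
    c * ∫ x in K, f x ∂μ ≤ ∫ x in U, f x * g x ∂μ := by
  calc c * ∫ x in K, f x ∂μ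
      = ∫ x in K, f x * c ∂μ := by rw [integral_mul_const, mul_comm]
    _ ≤ ∫ x in K, f x * g x ∂μ :=
        setIntegral_mono_on (hf.mul_const c) (hfg.mono_set hKU) hK fun x hx ↦
          mul_le_mul_of_nonneg_left (hcg x hx) (hf₀ x (hKU hx))
    _ ≤ ∫ x in U, f x * g x ∂μ :=
        setIntegral_mono_set hfg
          (ae_restrict_of_forall_mem hU fun x hx ↦ mul_nonneg (hf₀ x hx) (hg₀ x))
          hKU.eventuallyLE

end WeightedIntegral

section ThreeIntervals

variable {f g w : ℝ → ℝ} {m r ρ R : ℝ}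

lemma DistribSecondDerivGE.setIntegral_mul_slidingIntegral_le
    (hfg : DistribSecondDerivGE (ball m R) f g) (hw : ContDiff ℝ ∞ w) (hw₀ : ∀ t, 0 ≤ w t)
    (hwm : support w ⊆ closedBall m ρ) (hr : 0 ≤ r) (hR : ρ + 2 * r < R) :
    ∫ t in ball m R, g t * slidingIntegral r (slidingIntegral r w) t ≤
      ∫ t in ball m R, f t * secondDiff (2 * r) w t := by
  have tsupport_subset :
      tsupport (slidingIntegral r (slidingIntegral r w)) ⊆ closedBall m (ρ + r + r) :=
    closure_minimal (support_slidingIntegral_subset (support_slidingIntegral_subset hwm hr) hr)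
      isClosed_closedBall
  rw [← deriv_deriv_slidingIntegral_slidingIntegral hw]
  exact hfg _ (contDiff_slidingIntegral (contDiff_slidingIntegral hw r) r)
    ((isCompact_closedBall _ _).of_isClosed_subset (isClosed_tsupport _) tsupport_subset)
    (tsupport_subset.trans (closedBall_subset_ball (by linarith)))
    (slidingIntegral_nonneg (slidingIntegral_nonneg hw₀ hr) hr)

lemma sub_mem_ball_and_mem_ball_and_add_mem_ball {s t : ℝ} (hs : 0 ≤ s) (hR : ρ + s ≤ R)
    (ht : t ∈ ball m ρ) : t - s ∈ ball m R ∧ t ∈ ball m R ∧ t + s ∈ ball m R := by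
  rw [Real.ball_eq_Ioo] at *
  obtain ⟨hl, hu⟩ := ht
  refine ⟨⟨?_, ?_⟩, ⟨?_, ?_⟩, ⟨?_, ?_⟩⟩ <;> linarith

lemma setIntegral_ball_eq_intervalIntegral (hr : 0 ≤ r) (m : ℝ) (f : ℝ → ℝ) :
    ∫ t in ball m r, f t = ∫ t in (m - r)..(m + r), f t := by
  rw [Real.ball_eq_Ioo, intervalIntegral.integral_of_le (by linarith),
    integral_Ioc_eq_integral_Ioo]

theorem exists_mul_integral_le_integral_secondDiff (m : ℝ) (hr : 0 < r) :
    ∃ c > 0, ∀ h : ℝ → ℝ, (∀ t ∈ ball m (3 * r), 0 ≤ h t) → ConvexOn ℝ (ball m (3 * r)) h →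
      IntegrableOn h (ball m (3 * r)) → DistribSecondDerivGE (ball m (3 * r)) h h →
      c * ∫ t in ball m r, h t ≤ ∫ t in ball m r, secondDiff (2 * r) h t := by
  let w : ContDiffBump m := ⟨r / 4, r / 2, by positivity, by linarith⟩
  have support_w : support w = ball m (r / 2) := w.support_eq
  set φ := slidingIntegral r (slidingIntegral r w)
  have φ_nonneg : ∀ t, 0 ≤ φ t :=
    slidingIntegral_nonneg (slidingIntegral_nonneg (fun _ ↦ w.nonneg) hr.le) hr.le
  obtain ⟨c, hc, c_le_φ⟩ := exists_pos_le_slidingIntegral_slidingIntegral w.contDiff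
    (fun _ ↦ w.nonneg) (w.pos_of_mem_ball (mem_ball_self w.rOut_pos)) hr
  refine ⟨c, hc, fun h h_nonneg h_convex h_int h_distrib ↦ ?_⟩
  have h_mul_φ_int : IntegrableOn (fun t ↦ h t * φ t) (ball m (3 * r)) :=
    h_int.mul_continuousOn_of_subset
      (contDiff_slidingIntegral (contDiff_slidingIntegral w.contDiff r) r).continuous.continuousOn
      measurableSet_ball (isCompact_closedBall m (3 * r)) ball_subset_closedBall
  have middle_subset : ball m r ⊆ ball m (3 * r) := ball_subset_ball (by linarith)
  have translates_mem (t : ℝ) (ht : t ∈ ball m r) : t - 2 * r ∈ ball m (3 * r) ∧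
      t ∈ ball m (3 * r) ∧ t + 2 * r ∈ ball m (3 * r) :=
    sub_mem_ball_and_mem_ball_and_add_mem_ball (by positivity) (by linarith) ht
  have support_w_subset : support w ⊆ ball m r := by
    rw [support_w]; exact ball_subset_ball (by linarith)
  calc c * ∫ t in ball m r, h t
      ≤ ∫ t in ball m (3 * r), h t * φ t :=
        mul_setIntegral_le_setIntegral_mul measurableSet_ball measurableSet_ball
          middle_subset (h_int.mono_set middle_subset) h_mul_φ_int h_nonneg φ_nonneg
          fun t ht ↦ c_le_φ t (ball_subset_closedBall ht)
    _ ≤ ∫ t in ball m (3 * r), h t * secondDiff (2 * r) w t :=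
        h_distrib.setIntegral_mul_slidingIntegral_le w.contDiff (fun _ ↦ w.nonneg)
          (support_w.trans_subset ball_subset_closedBall) hr.le (by linarith)
    _ = ∫ t, secondDiff (2 * r) h t * w t :=
        setIntegral_mul_secondDiff measurableSet_ball h_int w.continuous w.hasCompactSupport
          fun t ht ↦ translates_mem t (support_w_subset ht)
    _ ≤ ∫ t in ball m r, secondDiff (2 * r) h t :=
        integral_mul_le_setIntegral measurableSet_ball
          (integrableOn_secondDiff measurableSet_ball measurableSet_ball h_int translates_mem)
          (fun t ht ↦ secondDiff_nonneg_of_convexOn h_convex (translates_mem t ht).1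
            (translates_mem t ht).2.2)
          (fun _ ↦ w.nonneg) (fun _ ↦ w.le_one) support_w_subset

theorem exists_mul_integral_le_of_distribSecondDerivGE (m : ℝ) (hr : 0 < r) :
    ∃ c > 0, ∀ h : ℝ → ℝ, (∀ t ∈ ball m (3 * r), 0 ≤ h t) → ConvexOn ℝ (ball m (3 * r)) h →
      IntegrableOn h (ball m (3 * r)) → DistribSecondDerivGE (ball m (3 * r)) h h →
      c * ∫ t in (m - r)..(m + r), h t ≤ (∫ t in (m + r)..(m + 3 * r), h t) -
        2 * (∫ t in (m - r)..(m + r), h t) + ∫ t in (m - 3 * r)..(m - r), h t := by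
  obtain ⟨c, hc, le_secondDiff⟩ := exists_mul_integral_le_integral_secondDiff m hr
  refine ⟨c, hc, fun h h_nonneg h_convex h_int h_distrib ↦ ?_⟩
  have h_intervalIntegrable {a b : ℝ} (ha : m - 3 * r ≤ a) (hab : a ≤ b) (hb : b ≤ m + 3 * r) :
      IntervalIntegrable h volume a b :=
    (intervalIntegrable_iff_integrableOn_Ioo_of_le hab).2
      (h_int.mono_set (Real.ball_eq_Ioo m (3 * r) ▸ Ioo_subset_Ioo ha hb))
  have hdiff := le_secondDiff h h_nonneg h_convex h_int h_distrib
  rw [setIntegral_ball_eq_intervalIntegral hr.le, setIntegral_ball_eq_intervalIntegral hr.le,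
    integral_secondDiff (h_intervalIntegrable (by linarith) (by linarith) (by linarith))
      (h_intervalIntegrable (by linarith) (by linarith) (by linarith))
      (h_intervalIntegrable (by linarith) (by linarith) (by linarith))] at hdiff
  rwa [show m - r + 2 * r = m + r by ring, show m + r + 2 * r = m + 3 * r by ring,
    show m - r - 2 * r = m - 3 * r by ring, show m + r - 2 * r = m - r by ring] at hdiff

end ThreeIntervals

lemma one_add_mul_le_of_mul_le_secondDiff {A B C c : ℝ} (hc : 0 < c) (hB : 0 ≤ B)
    (hdiff : c * B ≤ C - 2 * B + A) (hdecay : (1 - c / (c + 2)) * A ≤ B) :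
    (1 + c / (c + 2)) * B ≤ C := by
  have A_le : A ≤ (1 + c / 2) * B := by
    have one_sub_eq : 1 - c / (c + 2) = 2 / (c + 2) := by field_simp; ring
    rw [one_sub_eq, div_mul_eq_mul_div, div_le_iff₀ (by positivity)] at hdecay
    linarith
  have ratio_le : c / (c + 2) ≤ c / 2 := by gcongr; linarith
  calc (1 + c / (c + 2)) * B ≤ (1 + c / 2) * B := by gcongr
    _ ≤ C := by linarith

/-- three-annuli property. There is a universal `η ∈ (0,1)` such that for
every nonnegative convex integrable `h` on `(0,3)` satisfying `h″ ≥ h` in the sense of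
distributions and not identically zero, if `∫₁² h ≥ (1−η) ∫₀¹ h` then
`∫₂³ h ≥ (1+η) ∫₁² h`. -/
theorem stmt2 :
    ∃ η : ℝ, η ∈ Set.Ioo (0:ℝ) 1 ∧
      ∀ h : ℝ → ℝ,
        (∀ t ∈ Set.Ioo (0:ℝ) 3, 0 ≤ h t) →
        ConvexOn ℝ (Set.Ioo (0:ℝ) 3) h →
        IntegrableOn h (Set.Ioo (0:ℝ) 3) →
        (∀ φ : ℝ → ℝ, ContDiff ℝ (⊤ : ℕ∞) φ → HasCompactSupport φ →
          tsupport φ ⊆ Set.Ioo (0:ℝ) 3 → (∀ t, 0 ≤ φ t) →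
          (∫ t in Set.Ioo (0:ℝ) 3, h t * φ t)
            ≤ ∫ t in Set.Ioo (0:ℝ) 3, h t * deriv (deriv φ) t) →
        (∃ t ∈ Set.Ioo (0:ℝ) 3, h t ≠ 0) →
        ((1 - η) * ∫ t in (0:ℝ)..1, h t) ≤ (∫ t in (1:ℝ)..2, h t) →
        ((1 + η) * ∫ t in (1:ℝ)..2, h t) ≤ (∫ t in (2:ℝ)..3, h t) := by
  obtain ⟨c, hc, mul_integral_le⟩ :=
    exists_mul_integral_le_of_distribSecondDerivGE (3 / 2) one_half_pos
  norm_num [Real.ball_eq_Ioo, -mem_Ioo] at mul_integral_le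
  refine ⟨c / (c + 2), ⟨by positivity, (div_lt_one (by positivity)).2 (by linarith)⟩, ?_⟩
  intro h h_nonneg h_convex h_int h_distrib _ hdecay
  have middle_nonneg : 0 ≤ ∫ t in (1 : ℝ)..2, h t :=
    intervalIntegral.integral_nonneg one_le_two fun t ht ↦
      h_nonneg t ⟨by linarith [ht.1], by linarith [ht.2]⟩
  exact one_add_mul_le_of_mul_le_secondDiff hc middle_nonneg
    (mul_integral_le h h_nonneg h_convex h_int h_distrib) hdecay
end
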